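/- For i ∈ {1,2}, let G_i = (V_i, E_i) be a γ-robustly self-ordered graph, and let G = (V_1 ∪ V_2, E_1 ∪ E_2 ∪ E) be a graph of maximum degree d, where V_1 and V_2 are disjoint and every edge in E has exactly one endpoint in each V_i. If the maximum degree in G of every vertex in V_1 is strictly smaller than the minimum degree in G of every vertex in V_2, then G is γ/(2d+3)-robustly self-ordered. -/

import Mathlib

open Finset

section

variable {α : Type*} [DecidableEq α]

theorem card_symmDiff_image_map (F : Finset (Sym2 α)) (ν : Equiv.Perm α) :
    (symmDiff F (F.image (Sym2.map ν))).card =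
      #{e ∈ F | e.map ν ∉ F} + #{e ∈ F | e ∉ F.image (Sym2.map ν)} := by
  rw [symmDiff_def, sup_eq_union, card_union_of_disjoint disjoint_sdiff_sdiff, add_comm,
    sdiff_eq_filter F, sdiff_eq_filter, filter_image,
    card_image_of_injective _ (Sym2.map.injective ν.injective)]

theorem sum_card_filter_mem (W : Finset α) (F : Finset (Sym2 α)) :
    ∑ w ∈ W, #{e ∈ F | w ∈ e} = ∑ e ∈ F, #{w ∈ W | w ∈ e} := by
  simp only [card_filter]
  exact sum_comm

theorem card_filter_mem_sym2_le (W : Finset α) (e : Sym2 α) : #{w ∈ W | w ∈ e} ≤ 2 := by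
  induction e with | _ a b =>
  refine (card_le_card (t := {a, b}) fun w hw => ?_).trans card_le_two
  simpa using (mem_filter.1 hw).2

/-- A vertex whose degree differs from that of its preimage lies on an edge of the symmetric
difference, so at most two such vertices exist per edge of the symmetric difference. -/
theorem card_le_two_mul_card_symmDiff (G : Finset (Sym2 α)) (μ : Equiv.Perm α) (B : Finset α)
    (hB : ∀ v ∈ B, #{e ∈ G | v ∈ e} ≠ #{e ∈ G | μ v ∈ e}) :
    #B ≤ 2 * (symmDiff G (G.image (Sym2.map μ))).card := by
  set D := symmDiff G (G.image (Sym2.map μ)) with hD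
  have hpos : ∀ w ∈ B.image μ, 1 ≤ #{e ∈ D | w ∈ e} := by
    intro w hw
    obtain ⟨v, hv, rfl⟩ := mem_image.1 hw
    by_contra! hlt
    have hempty : {e ∈ D | μ v ∈ e} = ∅ := card_eq_zero.1 (by omega)
    apply hB v hv
    have himg : {e ∈ G.image (Sym2.map μ) | μ v ∈ e} = {e ∈ G | v ∈ e}.image (Sym2.map μ) := by
      rw [filter_image]
      congr 1
      ext e
      simp [Sym2.mem_map]
    rw [← card_image_of_injective {e ∈ G | v ∈ e} (Sym2.map.injective μ.injective), ← himg]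
    congr 1
    ext e
    have he : e ∉ {e ∈ D | μ v ∈ e} := by simp [hempty]
    simp only [hD, mem_filter, mem_symmDiff] at he ⊢
    tauto
  calc #B = #(B.image μ) := (card_image_of_injective _ μ.injective).symm
    _ ≤ ∑ w ∈ B.image μ, #{e ∈ D | w ∈ e} := by simpa using sum_le_sum hpos
    _ = ∑ e ∈ D, #{w ∈ B.image μ | w ∈ e} := sum_card_filter_mem _ _
    _ ≤ ∑ e ∈ D, 2 := sum_le_sum fun e _ => card_filter_mem_sym2_le _ e
    _ = 2 * #D := by simp [mul_comm]

theorem even_card_symmDiff_image (G : Finset (Sym2 α)) (μ : Equiv.Perm α) :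
    Even (symmDiff G (G.image (Sym2.map μ))).card := by
  have h : #(G.image (Sym2.map μ)) = #G :=
    card_image_of_injective _ (Sym2.map.injective μ.injective)
  rw [symmDiff_def, sup_eq_union, card_union_of_disjoint disjoint_sdiff_sdiff,
    card_sdiff_comm h]
  exact ⟨_, rfl⟩

variable [Fintype α]

theorem exists_perm_extend_fixing_compl (S : Finset α) (μ : Equiv.Perm α) :
    ∃ ν : Equiv.Perm α, (∀ v ∉ S, ν v = v) ∧ (∀ v ∈ S, μ v ∈ S → ν v = μ v) := by
  obtain ⟨g, hg⟩ := Finset.exists_equiv_extend_of_card_eq (t := (univ : Finset α))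
    (s := univ.filter (fun x => x ∈ S → μ x ∈ S))
    (f := fun x => if x ∈ S then μ x else x) (by simp) (by intro x _; simp) (by
      intro x hx y hy hxy
      simp only [coe_filter, mem_univ, true_and, Set.mem_ofPred_eq] at hx hy hxy
      split_ifs at hxy with h1 h2 h2
      · exact μ.injective hxy
      · exact absurd (hxy ▸ hx h1) h2
      · exact absurd (hxy ▸ hy h2) h1
      · exact hxy)
  refine ⟨g.trans (Equiv.subtypeUnivEquiv (by simp)), ?_, ?_⟩
  · intro v hv
    have := hg v (by simp [hv])
    simpa [hv] using this
  · intro v hv hv'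
    have := hg v (by simp [hv'])
    simpa [hv] using this

theorem exists_perm_extend_moving (S : Finset α) (μ : Equiv.Perm α) :
    ∃ ν : Equiv.Perm α, (∀ v ∉ S, ν v = v) ∧ (∀ v ∈ S, μ v ∈ S → ν v = μ v) ∧
      ∀ a ∈ S, μ a ∉ S → ∀ b ∈ S, μ b ∉ S → a ≠ b → ν a ≠ a := by
  obtain ⟨ν, hν, hmax⟩ := Finset.exists_max_image
    (univ.filter (fun ν : Equiv.Perm α => (∀ v ∉ S, ν v = v) ∧ (∀ v ∈ S, μ v ∈ S → ν v = μ v)))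
    (fun ν => ν.support.card) (by
      obtain ⟨ν, h⟩ := exists_perm_extend_fixing_compl S μ
      exact ⟨ν, by simpa using h⟩)
  simp only [mem_filter, mem_univ, true_and] at hν hmax
  refine ⟨ν, hν.1, hν.2, fun a ha ha' b hb hb' hab hfix => ?_⟩
  have hother : ∀ v, v ≠ a → v ≠ b → (ν * Equiv.swap a b) v = ν v := fun v h1 h2 => by
    simp [Equiv.swap_apply_of_ne_of_ne h1 h2]
  refine absurd (hmax (ν * Equiv.swap a b) ⟨fun v hv => ?_, fun v hv hv' => ?_⟩) (not_le.2 ?_)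
  · rw [hother v (by grind) (by grind), hν.1 v hv]
  · rw [hother v (by grind) (by grind), hν.2 v hv hv']
  · refine card_lt_card ⟨fun v hv => ?_, fun h => ?_⟩
    · rw [Equiv.Perm.mem_support] at hv ⊢
      by_cases h1 : v = a
      · exact absurd (h1 ▸ hfix) hv
      by_cases h2 : v = b
      · subst h2; simpa [hfix] using Ne.symm h1
      · rwa [hother v h1 h2]
    · have : a ∈ (ν * Equiv.swap a b).support := by
        rw [Equiv.Perm.mem_support]
        simp only [Equiv.Perm.coe_mul, Function.comp_apply, Equiv.swap_apply_left]
        intro h'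
        exact hab (ν.injective (hfix.trans h'.symm))
      exact Equiv.Perm.mem_support.1 (h this) hfix

theorem card_symmDiff_image_map_le (S : Finset α) (F G : Finset (Sym2 α))
    (hFS : ∀ e ∈ F, ∀ v ∈ e, v ∈ S) (hGF : ∀ e ∈ G, (∀ v ∈ e, v ∈ S) → e ∈ F)
    (μ ν : Equiv.Perm α) (hagree : ∀ v ∈ S, μ v ∈ S → ν v = μ v) :
    (symmDiff F (F.image (Sym2.map ν))).card ≤
      (#{e ∈ F | e.map μ ∉ G} + #{e ∈ F | e ∉ G.image (Sym2.map μ)}) +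
      (#{e ∈ F | e.map μ ∈ G ∧ ∃ v ∈ e, μ v ∉ S} + #{e ∈ F | ∃ v ∈ e, μ.symm v ∉ S}) := by
  have hmap : ∀ e : Sym2 α, (∀ v ∈ e, v ∈ S) → (∀ v ∈ e, μ v ∈ S) → e.map ν = e.map μ :=
    fun e h h' => Sym2.map_congr fun v hv => hagree v (h v hv) (h' v hv)
  have h1 : #{e ∈ F | e.map ν ∉ F} ≤
      #{e ∈ F | e.map μ ∉ G} + #{e ∈ F | e.map μ ∈ G ∧ ∃ v ∈ e, μ v ∉ S} := by
    refine (card_le_card fun e he => ?_).trans (card_union_le _ _)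
    simp only [mem_filter, mem_union] at he ⊢
    by_contra! hcon
    have hG : e.map μ ∈ G := hcon.1 he.1
    have hgood := hcon.2 he.1 hG
    refine he.2 (hmap e (hFS e he.1) hgood ▸ hGF _ hG fun v hv => ?_)
    obtain ⟨u, hu, rfl⟩ := Sym2.mem_map.1 hv
    exact hgood u hu
  have h2 : #{e ∈ F | e ∉ F.image (Sym2.map ν)} ≤
      #{e ∈ F | e ∉ G.image (Sym2.map μ)} + #{e ∈ F | ∃ v ∈ e, μ.symm v ∉ S} := by
    refine (card_le_card fun e he => ?_).trans (card_union_le _ _)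
    simp only [mem_filter, mem_union] at he ⊢
    by_contra! hcon
    have hG : e ∈ G.image (Sym2.map μ) := hcon.1 he.1
    have hgood := hcon.2 he.1
    obtain ⟨e', he', rfl⟩ := mem_image.1 hG
    have hS : ∀ v ∈ e', v ∈ S := fun v hv => by
      simpa using hgood (μ v) (Sym2.mem_map.2 ⟨v, hv, rfl⟩)
    exact he.2 (mem_image.2 ⟨e', hGF e' he' hS, hmap e' hS fun v hv =>
      hFS _ he.1 _ (Sym2.mem_map.2 ⟨v, hv, rfl⟩)⟩)
  rw [card_symmDiff_image_map]
  omega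

theorem le_degree_bound_of_robust (S : Finset α) (hS : S.Nontrivial) (F : Finset (Sym2 α))
    (γ : ℝ) (d : ℕ)
    (hFS : ∀ e ∈ F, ∀ v ∈ e, v ∈ S) (hdiag : ∀ e ∈ F, ¬ e.IsDiag)
    (hrso : ∀ μ : Equiv.Perm α, (∀ v ∉ S, μ v = v) →
      γ * ((Finset.univ.filter (fun v => μ v ≠ v)).card : ℝ) ≤
        ((symmDiff F (F.image (Sym2.map ⇑μ))).card : ℝ))
    (hdeg : ∀ v, #{e ∈ F | v ∈ e} ≤ d) : γ ≤ d := by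
  obtain ⟨c, hc, hcS⟩ := S.exists_cycleOn
  have hfix : ∀ v ∉ S, c v = v := fun v hv => by
    by_contra h
    exact hv (hcS (Equiv.Perm.mem_support.2 h))
  have hsupp : univ.filter (fun v => c v ≠ v) = S := by
    ext v
    simp only [mem_filter, mem_univ, true_and]
    exact ⟨fun h => by_contra fun hv => h (hfix v hv), fun hv => hc.apply_ne hS hv⟩
  have h := hrso c hfix
  rw [hsupp] at h
  have h1 : (symmDiff F (F.image (Sym2.map c))).card ≤ ∑ e ∈ F, 2 := by
    rw [card_symmDiff_image_map, sum_const, smul_eq_mul, mul_two]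
    exact add_le_add (card_filter_le _ _) (card_filter_le _ _)
  have h2 : ∑ e ∈ F, 2 ≤ ∑ e ∈ F, #{w ∈ S | w ∈ e} := sum_le_sum fun e he => by
    have hd := hdiag e he
    have hm := hFS e he
    induction e with | _ a b =>
    rw [Sym2.mk_isDiag_iff] at hd
    rw [← card_pair hd]
    refine card_le_card fun w hw => ?_
    have hw' : w ∈ s(a, b) := by simpa using hw
    exact mem_filter.2 ⟨hm w hw', hw'⟩
  have h3 : ∑ w ∈ S, #{e ∈ F | w ∈ e} ≤ #S * d := by
    simpa using sum_le_card_nsmul S _ d fun w _ => hdeg w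
  rw [sum_card_filter_mem] at h3
  have h4 : γ * #S ≤ d * #S := h.trans (by rw [mul_comm]; exact_mod_cast h1.trans (h2.trans h3))
  exact le_of_mul_le_mul_right h4 (by exact_mod_cast hS.nonempty.card_pos)

theorem card_leaving_eq_card_entering (S : Finset α) (μ : Equiv.Perm α) :
    #{v ∈ S | μ v ∉ S} = #{v ∈ Sᶜ | μ v ∉ Sᶜ} := by
  have h1 := card_filter_add_card_filter_not (s := S) (fun v => μ v ∈ S)
  have h2 := card_filter_add_card_filter_not (s := univ.filter fun v => μ v ∈ S) (fun v => v ∈ S)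
  have h3 : #(univ.filter fun v => μ v ∈ S) = #S := by
    rw [← card_image_of_injective _ μ.injective]
    congr 1
    ext v
    simp only [mem_image, mem_filter, mem_univ, true_and]
    exact ⟨by rintro ⟨u, hu, rfl⟩; exact hu, fun hv => ⟨μ.symm v, by simpa using hv, by simp⟩⟩
  have h4 : (univ.filter fun v => μ v ∈ S).filter (fun v => v ∈ S) = {v ∈ S | μ v ∈ S} := by
    ext v; simp [and_comm]
  have h5 : (univ.filter fun v => μ v ∈ S).filter (fun v => v ∉ S) =
      {v ∈ Sᶜ | μ v ∉ Sᶜ} := by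
    ext v; simp [and_comm]
  rw [h4, h5] at h2
  omega

theorem card_crossing_edges_le (S : Finset α) (E1 E2 E : Finset (Sym2 α))
    (hE1 : ∀ e ∈ E1, ∀ v ∈ e, v ∈ S) (hE2 : ∀ e ∈ E2, ∀ v ∈ e, v ∈ Sᶜ)
    (hsimple : ∀ e ∈ E1 ∪ E2 ∪ E, ¬ e.IsDiag) (μ : Equiv.Perm α) :
    (#{e ∈ E1 | e.map μ ∈ E1 ∪ E2 ∪ E ∧ ∃ v ∈ e, μ v ∉ S} +
        #{e ∈ E1 | ∃ v ∈ e, μ.symm v ∉ S}) +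
      (#{e ∈ E2 | e.map μ ∈ E1 ∪ E2 ∪ E ∧ ∃ v ∈ e, μ v ∉ Sᶜ} +
        #{e ∈ E2 | ∃ v ∈ e, μ.symm v ∉ Sᶜ}) ≤
    ∑ w ∈ ({v ∈ S | μ v ∉ S} ∪ {v ∈ Sᶜ | μ v ∉ Sᶜ}).image μ,
      #{e ∈ E1 ∪ E2 ∪ E | w ∈ e} := by
  set G := E1 ∪ E2 ∪ E with hG
  have hX : ∀ (F : Finset (Sym2 α)) (T : Finset α),
      #{e ∈ F | e.map μ ∈ G ∧ ∃ v ∈ e, μ v ∉ T} =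
        #{f ∈ G | f.map μ.symm ∈ F ∧ ∃ v ∈ f, v ∉ T} := by
    intro F T
    rw [← card_image_of_injective _ (Sym2.map.injective μ.injective)]
    congr 1
    ext f
    simp only [mem_image, mem_filter]
    constructor
    · rintro ⟨e, ⟨he, heG, v, hv, hvT⟩, rfl⟩
      exact ⟨heG, by simpa [Sym2.map_map] using he, μ v, Sym2.mem_map.2 ⟨v, hv, rfl⟩, hvT⟩
    · rintro ⟨hf, hfF, v, hv, hvT⟩
      have hback : (f.map μ.symm).map μ = f := by simp [Sym2.map_map]
      exact ⟨_, ⟨hfF, by rwa [hback], μ.symm v, Sym2.mem_map.2 ⟨v, hv, rfl⟩, by simpa using hvT⟩,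
        hback⟩
  have hY : ∀ (F : Finset (Sym2 α)) (T : Finset α), F ⊆ G →
      #{e ∈ F | ∃ v ∈ e, μ.symm v ∉ T} = #{f ∈ G | f ∈ F ∧ ∃ v ∈ f, μ.symm v ∉ T} := by
    intro F T hF
    congr 1
    ext f
    simp only [mem_filter]
    exact ⟨fun h => ⟨hF h.1, h⟩, fun h => h.2⟩
  rw [hX, hX, hY E1 S (by grind), hY E2 Sᶜ (by grind), sum_card_filter_mem]
  rw [card_filter _ G, card_filter _ G, card_filter _ G, card_filter _ G]
  simp only [← sum_add_distrib]
  refine sum_le_sum fun f hf => ?_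
  have hd := hsimple f hf
  induction f with | _ a b =>
  rw [Sym2.mk_isDiag_iff] at hd
  have hcard : ∀ W : Finset α, #{w ∈ W | w ∈ s(a, b)} =
      (if a ∈ W then 1 else 0) + (if b ∈ W then 1 else 0) := by
    intro W
    have : {w ∈ W | w ∈ s(a, b)} = {w ∈ ({a, b} : Finset α) | w ∈ W} := by
      ext w; simp [and_comm]
    rw [this, card_filter, sum_pair hd]
  have hW : ∀ w, w ∈ ({v ∈ S | μ v ∉ S} ∪ {v ∈ Sᶜ | μ v ∉ Sᶜ}).image μ ↔
      (μ.symm w ∈ S ∧ w ∉ S ∨ μ.symm w ∉ S ∧ w ∈ S) := by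
    intro w
    rw [← Equiv.coe_toEmbedding, ← map_eq_image, mem_map_equiv]
    simp
  rw [hcard]
  simp only [hW]
  have h1 : s(a, b) ∈ E1 → a ∈ S ∧ b ∈ S := fun h => ⟨hE1 _ h a (by simp), hE1 _ h b (by simp)⟩
  have h2 : s(a, b) ∈ E2 → a ∉ S ∧ b ∉ S := fun h =>
    ⟨mem_compl.1 (hE2 _ h a (by simp)), mem_compl.1 (hE2 _ h b (by simp))⟩
  have h3 : s(μ.symm a, μ.symm b) ∈ E1 → μ.symm a ∈ S ∧ μ.symm b ∈ S := fun h =>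
    ⟨hE1 _ h _ (by simp), hE1 _ h _ (by simp)⟩
  have h4 : s(μ.symm a, μ.symm b) ∈ E2 → μ.symm a ∉ S ∧ μ.symm b ∉ S := fun h =>
    ⟨mem_compl.1 (hE2 _ h _ (by simp)), mem_compl.1 (hE2 _ h _ (by simp))⟩
  simp only [Sym2.map_mk, Sym2.mem_iff, exists_eq_or_imp, exists_eq_left, mem_compl, not_not]
  clear hX hY hW hcard hE1 hE2 hsimple hf
  by_cases ha : a ∈ S <;> by_cases hb : b ∈ S <;> by_cases ha' : μ.symm a ∈ S <;>
    by_cases hb' : μ.symm b ∈ S <;> grind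

/-- Two single vertices cannot have distinct degrees. -/
theorem nontrivial_or_nontrivial_of_degree_lt (S : Finset α) (E1 E2 E : Finset (Sym2 α))
    (hE1 : ∀ e ∈ E1, ∀ v ∈ e, v ∈ S) (hE2 : ∀ e ∈ E2, ∀ v ∈ e, v ∈ Sᶜ)
    (hE : ∀ e ∈ E, ∃ a ∈ S, ∃ b ∈ Sᶜ, e = s(a, b))
    (hsimple : ∀ e ∈ E1 ∪ E2 ∪ E, ¬ e.IsDiag)
    (u w : α) (hu : u ∈ S) (hw : w ∈ Sᶜ)
    (hlt : #{e ∈ E1 ∪ E2 ∪ E | u ∈ e} < #{e ∈ E1 ∪ E2 ∪ E | w ∈ e}) :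
    S.Nontrivial ∨ Sᶜ.Nontrivial := by
  by_contra! hcon
  have hS : ∀ x ∈ S, x = u := fun x hx => hcon.1 hx hu
  have hS' : ∀ x ∈ Sᶜ, x = w := fun x hx => hcon.2 hx hw
  refine absurd (card_le_card fun e he => ?_) (not_le.2 hlt)
  rw [mem_filter] at he ⊢
  refine ⟨he.1, ?_⟩
  have hd := hsimple e he.1
  obtain ⟨he, hwe⟩ := he
  rw [mem_union, mem_union] at he
  obtain (h | h) | h := he
  · exact absurd (hE1 e h w hwe) (mem_compl.1 hw)
  · induction e with | _ a b =>
    refine absurd ?_ hd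
    rw [Sym2.mk_isDiag_iff, hS' a (hE2 _ h a (by simp)), hS' b (hE2 _ h b (by simp))]
  · obtain ⟨a, ha, b, hb, rfl⟩ := hE e h
    simp [hS a ha]

end

/-- Combining two `γ`-robustly self-ordered graphs `G₁ = (V₁, E₁)` and `G₂ = (V₂, E₂)` with an
arbitrary bipartite graph `E` between them, if the resulting graph has maximum degree `d` and
every vertex of `V₁` has degree strictly smaller than every vertex of `V₂`, then the combined
graph is `γ/(2d+3)`-robustly self-ordered. -/
theorem stmt6 {α : Type*} [Fintype α] [DecidableEq α] (γ : ℝ) (d : ℕ)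
    (V1 V2 : Finset α) (hdisj : Disjoint V1 V2) (hcover : V1 ∪ V2 = Finset.univ)
    (E1 E2 E : Finset (Sym2 α))
    (hE1 : ∀ e ∈ E1, ∀ v ∈ e, v ∈ V1)
    (hE2 : ∀ e ∈ E2, ∀ v ∈ e, v ∈ V2)
    (hE : ∀ e ∈ E, ∃ a ∈ V1, ∃ b ∈ V2, e = s(a, b))
    (hsimple : ∀ e ∈ E1 ∪ E2 ∪ E, ¬ e.IsDiag)
    (hrso1 : ∀ μ : Equiv.Perm α, (∀ v ∉ V1, μ v = v) →
      γ * ((Finset.univ.filter (fun v => μ v ≠ v)).card : ℝ) ≤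
        ((symmDiff E1 (E1.image (Sym2.map ⇑μ))).card : ℝ))
    (hrso2 : ∀ μ : Equiv.Perm α, (∀ v ∉ V2, μ v = v) →
      γ * ((Finset.univ.filter (fun v => μ v ≠ v)).card : ℝ) ≤
        ((symmDiff E2 (E2.image (Sym2.map ⇑μ))).card : ℝ))
    (hmaxdeg : ∀ v : α, ((E1 ∪ E2 ∪ E).filter (fun e => v ∈ e)).card ≤ d)
    (hgap : ∀ u ∈ V1, ∀ w ∈ V2,
      ((E1 ∪ E2 ∪ E).filter (fun e => u ∈ e)).card <
        ((E1 ∪ E2 ∪ E).filter (fun e => w ∈ e)).card) :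
    ∀ μ : Equiv.Perm α,
      (γ / (2 * d + 3)) * ((Finset.univ.filter (fun v => μ v ≠ v)).card : ℝ) ≤
        ((symmDiff (E1 ∪ E2 ∪ E) ((E1 ∪ E2 ∪ E).image (Sym2.map ⇑μ))).card : ℝ) := by
  intro μ
  obtain rfl : V2 = V1ᶜ := (IsCompl.of_eq hdisj.eq_bot hcover).compl_eq.symm
  have hE12 : Disjoint E1 E2 := disjoint_left.2 fun e h1 h2 => by
    induction e with | _ a b =>
    exact mem_compl.1 (hE2 _ h2 a (by simp)) (hE1 _ h1 a (by simp))
  have hGE1 : ∀ e ∈ E1 ∪ E2 ∪ E, (∀ v ∈ e, v ∈ V1) → e ∈ E1 := by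
    intro e he hv
    rw [mem_union, mem_union] at he
    obtain (h | h) | h := he
    · exact h
    · induction e with | _ a b =>
      exact absurd (hv a (by simp)) (mem_compl.1 (hE2 _ h a (by simp)))
    · obtain ⟨a, ha, b, hb, rfl⟩ := hE e h
      exact absurd (hv b (by simp)) (mem_compl.1 hb)
  have hGE2 : ∀ e ∈ E1 ∪ E2 ∪ E, (∀ v ∈ e, v ∈ V1ᶜ) → e ∈ E2 := by
    intro e he hv
    rw [mem_union, mem_union] at he
    obtain (h | h) | h := he
    · induction e with | _ a b =>
      exact absurd (hE1 _ h a (by simp)) (mem_compl.1 (hv a (by simp)))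
    · exact h
    · obtain ⟨a, ha, b, hb, rfl⟩ := hE e h
      exact absurd ha (mem_compl.1 (hv a (by simp)))
  obtain ⟨ν₁, hoff₁, hag₁, hmv₁⟩ := exists_perm_extend_moving V1 μ
  obtain ⟨ν₂, hoff₂, hag₂, hmv₂⟩ := exists_perm_extend_moving V1ᶜ μ
  have hD₁ := card_symmDiff_image_map_le V1 E1 _ hE1 hGE1 μ ν₁ hag₁
  have hD₂ := card_symmDiff_image_map_le V1ᶜ E2 _ hE2 hGE2 μ ν₂ hag₂
  have hcross := card_crossing_edges_le V1 E1 E2 E hE1 hE2 hsimple μ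
  have hcardB := card_leaving_eq_card_entering V1 μ
  have hlow := card_le_two_mul_card_symmDiff (E1 ∪ E2 ∪ E) μ
    ({v ∈ V1 | μ v ∉ V1} ∪ {v ∈ V1ᶜ | μ v ∉ V1ᶜ}) (by
      intro v hv
      simp only [mem_union, mem_filter, mem_compl, not_not] at hv
      obtain ⟨h, h'⟩ | ⟨h, h'⟩ := hv
      · exact (hgap v h (μ v) (mem_compl.2 h')).ne
      · exact (hgap (μ v) h' v (mem_compl.2 h)).ne')
  have heven := even_card_symmDiff_image (E1 ∪ E2 ∪ E) μ
  have hDG := card_symmDiff_image_map (E1 ∪ E2 ∪ E) μ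
  have hnf₁ := hrso1 ν₁ hoff₁
  have hnf₂ := hrso2 ν₂ hoff₂
  have hle₁ : γ ≤ d ∨ ¬ V1.Nontrivial := by
    refine or_iff_not_imp_right.2 fun h => le_degree_bound_of_robust V1 (not_not.1 h) E1 γ d hE1
      (fun e he => hsimple e (by grind)) hrso1 fun v => (card_le_card ?_).trans (hmaxdeg v)
    exact filter_subset_filter _ (by grind)
  have hle₂ : γ ≤ d ∨ ¬ V1ᶜ.Nontrivial := by
    refine or_iff_not_imp_right.2 fun h => le_degree_bound_of_robust V1ᶜ (not_not.1 h) E2 γ d hE2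
      (fun e he => hsimple e (by grind)) hrso2 fun v => (card_le_card ?_).trans (hmaxdeg v)
    exact filter_subset_filter _ (by grind)
  have hγd : ({v ∈ V1 | μ v ∉ V1}).Nonempty → γ ≤ d := by
    rintro ⟨v, hv⟩
    rw [mem_filter] at hv
    have := nontrivial_or_nontrivial_of_degree_lt V1 E1 E2 E hE1 hE2 hE hsimple v (μ v) hv.1
      (mem_compl.2 hv.2) (hgap v hv.1 _ (mem_compl.2 hv.2))
    tauto
  have hadd : ∀ p : Sym2 α → Prop, ∀ [DecidablePred p],
      #{e ∈ E1 | p e} + #{e ∈ E2 | p e} ≤ #{e ∈ E1 ∪ E2 ∪ E | p e} := by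
    intro p _
    rw [← card_union_of_disjoint (disjoint_filter_filter hE12), ← filter_union]
    exact card_le_card (filter_subset_filter _ subset_union_left)
  have hadd₁ := hadd (fun e => e.map μ ∉ E1 ∪ E2 ∪ E)
  have hadd₂ := hadd (fun e => e ∉ (E1 ∪ E2 ∪ E).image (Sym2.map μ))
  have hBunion : #({v ∈ V1 | μ v ∉ V1} ∪ {v ∈ V1ᶜ | μ v ∉ V1ᶜ}) =
      2 * #{v ∈ V1 | μ v ∉ V1} := by
    rw [card_union_of_disjoint (disjoint_filter_filter hdisj), ← hcardB, two_mul]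
  have hsum : ∑ w ∈ ({v ∈ V1 | μ v ∉ V1} ∪ {v ∈ V1ᶜ | μ v ∉ V1ᶜ}).image μ,
      #{e ∈ E1 ∪ E2 ∪ E | w ∈ e} ≤ 2 * #{v ∈ V1 | μ v ∉ V1} * d := by
    rw [← hBunion, ← card_image_of_injective _ μ.injective]
    exact sum_le_card_nsmul _ _ d fun w _ => hmaxdeg w
  have hmoved : (#{v | μ v ≠ v} ≤ #{v | ν₁ v ≠ v} + #{v | ν₂ v ≠ v}) ∨
      #{v ∈ V1 | μ v ∉ V1} = 1 ∧ #{v | μ v ≠ v} ≤ #{v | ν₁ v ≠ v} + #{v | ν₂ v ≠ v} + 2 := by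
    by_cases hone : #{v ∈ V1 | μ v ∉ V1} = 1
    · refine .inr ⟨hone, ?_⟩
      rw [hone, mul_one] at hBunion
      rw [← hBunion]
      refine (card_le_card fun v hv => ?_).trans
        ((card_union_le _ _).trans (Nat.add_le_add_right (card_union_le _ _) _))
      simp only [mem_union, mem_filter, mem_univ, true_and] at hv ⊢
      by_contra! hcon
      by_cases h : v ∈ V1
      · exact hv (hag₁ v h (hcon.2.1 h) ▸ hcon.1.1)
      · have h' := mem_compl.2 h
        exact hv (hag₂ v h' (hcon.2.2 h') ▸ hcon.1.2)
    · left
      have hex : ∀ B : Finset α, #B ≠ 1 → ∀ a ∈ B, ∃ b ∈ B, a ≠ b := fun B hB a ha => by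
        have := card_pos.2 ⟨a, ha⟩
        obtain ⟨b, hb, hba⟩ := exists_mem_ne (s := B) (by omega) a
        exact ⟨b, hb, hba.symm⟩
      refine (card_le_card fun v hv => ?_).trans (card_union_le _ _)
      simp only [mem_union, mem_filter, mem_univ, true_and] at hv ⊢
      by_cases h : v ∈ V1
      · left
        by_cases hμ : μ v ∈ V1
        · rwa [hag₁ v h hμ]
        · obtain ⟨b, hb, hne⟩ := hex _ hone v (mem_filter.2 ⟨h, hμ⟩)
          exact hmv₁ v h hμ b (mem_filter.1 hb).1 (mem_filter.1 hb).2 hne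
      · right
        have h' := mem_compl.2 h
        by_cases hμ : μ v ∈ V1ᶜ
        · rwa [hag₂ v h' hμ]
        · obtain ⟨b, hb, hne⟩ := hex _ (hcardB ▸ hone) v (mem_filter.2 ⟨h', hμ⟩)
          exact hmv₂ v h' hμ b (mem_filter.1 hb).1 (mem_filter.1 hb).2 hne
  have hpos : γ ≤ d ∨ #{v ∈ V1 | μ v ∉ V1} = 0 := by
    rcases Finset.eq_empty_or_nonempty {v ∈ V1 | μ v ∉ V1} with h | h
    · exact .inr (card_eq_zero.2 h)
    · exact .inl (hγd h)
  rw [hBunion] at hlow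
  generalize (symmDiff (E1 ∪ E2 ∪ E) ((E1 ∪ E2 ∪ E).image (Sym2.map μ))).card = Δ at *
  generalize #{v ∈ V1 | μ v ∉ V1} = k at *
  generalize #{v | μ v ≠ v} = t at *
  generalize #{v | ν₁ v ≠ v} = t₁ at *
  generalize #{v | ν₂ v ≠ v} = t₂ at *
  have htotal : (symmDiff E1 (E1.image (Sym2.map ν₁))).card +
      (symmDiff E2 (E2.image (Sym2.map ν₂))).card ≤ Δ + 2 * k * d := by omega
  have hkΔ : k ≤ Δ := by omega
  have htotal' : γ * (t₁ + t₂) ≤ Δ + 2 * k * d := by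
    have : ((symmDiff E1 (E1.image (Sym2.map ν₁))).card : ℝ) +
      (symmDiff E2 (E2.image (Sym2.map ν₂))).card ≤ Δ + 2 * k * d := by exact_mod_cast htotal
    linarith
  rw [div_mul_eq_mul_div, div_le_iff₀ (by positivity)]
  rcases le_or_gt γ 0 with hγ | hγ
  · exact (mul_nonpos_of_nonpos_of_nonneg hγ (by positivity)).trans (by positivity)
  have hd0 : (0 : ℝ) ≤ d := by positivity
  have hΔ0 : (0 : ℝ) ≤ Δ := by positivity
  obtain ht | ⟨rfl, ht⟩ := hmoved
  · have ht' : (t : ℝ) ≤ t₁ + t₂ := by exact_mod_cast ht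
    have hkΔ' : (k : ℝ) ≤ Δ := by exact_mod_cast hkΔ
    nlinarith [mul_le_mul_of_nonneg_left ht' hγ.le, mul_le_mul_of_nonneg_right hkΔ' hd0]
  · have ht' : (t : ℝ) ≤ t₁ + t₂ + 2 := by exact_mod_cast ht
    have hΔ : (2 : ℝ) ≤ Δ := by
      obtain ⟨m, hm⟩ := heven
      exact_mod_cast (by omega : 2 ≤ Δ)
    have hγd' : γ ≤ d := hpos.resolve_right one_ne_zero
    push_cast at htotal'
    nlinarith [mul_le_mul_of_nonneg_left ht' hγ.le, mul_le_mul_of_nonneg_right hΔ hd0]
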